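/- arXiv:2501.16136 — 4 statements merged into one kernel-verified Lean document; each statement's English description precedes it below -/
import Mathlib

section
/- Let n be a positive even integer, n = 2m. For vectors a, b, c, c' of length n over GF(2), write a_L and a_R for the left half (entries 0,…,m−1) and right half (entries m,…,n−1) of a, and similarly for b, c, c'. Then g(a,b,c) ⊕ h(a,b,c') = g(a_L ⊕ a_R, b_L ⊕ b_R, c_R) ⊕ h(a_L ⊕ a_R, b_L ⊕ b_R, c'_L) ⊕ g(a_R, b_R, c'_L ⊕ c_R) ⊕ h(a_R, b_R, c'_L ⊕ c'_R) ⊕ g(a_L, b_L, c_L ⊕ c_R) ⊕ h(a_L, b_L, c'_L ⊕ c_R), where ⊕ on vectors denotes entrywise addition in GF(2), and g, h on the right-hand side are the corresponding polynomials for vectors of length m. -/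
/-!
Let `w` be the concatenation of `c` and `c'`. Then `g(a,b,c) + h(a,b,c')` is the single trilinear
form `T(a,b,w) = Σ a_j b_k w_{j+k}`: the terms with `j + k < n` make up `g`, the others `h`.
Pairing the product of two polynomials `a` and `b` with `w` gives `T`, so Karatsuba's identity
applies. With `w₀, w₁, w₂` the shifts of `w` by `0, m, 2m`, it reads
`T(a,b,w) = T(a_L+a_R, b_L+b_R, w₁) + T(a_R, b_R, w₂-w₁) + T(a_L, b_L, w₀-w₁)`.
In characteristic two the differences are sums, and cutting each of the three weights at `m` returns
to `g` and `h`.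
-/

/-- `g(a,b,c) = Σ_{i=0}^{n-1} Σ_{j=0}^{i} a_j b_{i-j} c_i` over `GF(2)`. -/
def gPoly (n : ℕ) (a b c : ℕ → ZMod 2) : ZMod 2 :=
  ∑ i ∈ Finset.range n, ∑ j ∈ Finset.range (i + 1), a j * b (i - j) * c i

/-- `h(a,b,c') = Σ_{i=0}^{n-2} Σ_{j=i+1}^{n-1} a_j b_{n+i-j} c'_i` over `GF(2)`. -/
def hPoly (n : ℕ) (a b c' : ℕ → ZMod 2) : ZMod 2 :=
  ∑ i ∈ Finset.range (n - 1), ∑ j ∈ Finset.Ico (i + 1) n, a j * b (n + i - j) * c' i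

/-- The trilinear form `Σ_{j,k<n} a_j b_k w_{j+k}`: the bilinear form in `a` and `b` of the
`n × n` Hankel matrix with entries `w_{j+k}`, equivalently the coefficients of the full product of
two polynomials paired with `w`. It unites `gPoly` and `hPoly`. -/
def hankelForm {R : Type*} [NonUnitalNonAssocSemiring R] (n : ℕ) (a b w : ℕ → R) : R :=
  ∑ j ∈ Finset.range n, ∑ k ∈ Finset.range n, a j * b k * w (j + k)

/-- The concatenation of the first `n` entries of `c` with `c'`. As vectors are encoded by functions
on `ℕ`, the length `n` of the first one has to be given. -/
def concatAt {α : Type*} (n : ℕ) (c c' : ℕ → α) (i : ℕ) : α :=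
  if i < n then c i else c' (i - n)

section concatAt

variable {α : Type*}

theorem concatAt_apply_of_lt {n i : ℕ} (c c' : ℕ → α) (h : i < n) : concatAt n c c' i = c i :=
  if_pos h

theorem concatAt_apply_add (n : ℕ) (c c' : ℕ → α) (i : ℕ) : concatAt n c c' (n + i) = c' i := by
  simp [concatAt]

theorem concatAt_shift_self (n : ℕ) (c : ℕ → α) (i : ℕ) :
    concatAt n c (fun k => c (n + k)) i = c i := by
  rcases lt_or_ge i n with h | h
  · exact concatAt_apply_of_lt _ _ h
  · obtain ⟨k, rfl⟩ := Nat.exists_eq_add_of_le h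
    exact concatAt_apply_add ..

theorem concatAt_add_apply_add (m n : ℕ) (c c' : ℕ → α) (i : ℕ) :
    concatAt (m + n) c c' (m + i) = concatAt n (fun k => c (m + k)) c' i := by
  simp [concatAt, Nat.add_sub_add_left]

theorem concatAt_add_concatAt [Add α] (n : ℕ) (c c' d d' : ℕ → α) (i : ℕ) :
    concatAt n c c' i + concatAt n d d' i =
      concatAt n (fun k => c k + d k) (fun k => c' k + d' k) i := by
  unfold concatAt
  split_ifs <;> rfl

end concatAt

theorem hankelForm_congr {R : Type*} [NonUnitalNonAssocSemiring R] {n : ℕ} {a b w w' : ℕ → R}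
    (h : ∀ i, i + 1 < 2 * n → w i = w' i) : hankelForm n a b w = hankelForm n a b w' := by
  refine Finset.sum_congr rfl fun j hj => Finset.sum_congr rfl fun k hk => ?_
  rw [Finset.mem_range] at hj hk
  rw [h (j + k) (by omega)]

theorem hankelForm_two_mul {R : Type*} [NonUnitalNonAssocSemiring R] (m : ℕ) (a b w : ℕ → R) :
    hankelForm (2 * m) a b w =
      hankelForm m a b w
    + hankelForm m a (fun i => b (m + i)) (fun i => w (m + i))
    + hankelForm m (fun i => a (m + i)) b (fun i => w (m + i))
    + hankelForm m (fun i => a (m + i)) (fun i => b (m + i)) (fun i => w (2 * m + i)) := by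
  have left_right (j k : ℕ) : j + (m + k) = m + (j + k) := by ring
  have right_left (j k : ℕ) : m + j + k = m + (j + k) := by ring
  simp only [hankelForm, two_mul, Finset.sum_range_add, Finset.sum_add_distrib, left_right,
    right_left]
  abel

theorem hankelForm_two_mul_karatsuba {R : Type*} [NonUnitalNonAssocRing R] (m : ℕ)
    (a b w : ℕ → R) :
    hankelForm (2 * m) a b w =
      hankelForm m (fun i => a i + a (m + i)) (fun i => b i + b (m + i)) (fun i => w (m + i))
    + hankelForm m (fun i => a (m + i)) (fun i => b (m + i)) (fun i => w (2 * m + i) - w (m + i))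
    + hankelForm m a b (fun i => w i - w (m + i)) := by
  rw [hankelForm_two_mul]
  simp only [hankelForm, add_mul, mul_add, mul_sub, Finset.sum_add_distrib,
    Finset.sum_sub_distrib]
  abel

theorem gPoly_eq_sum_range_sub (n : ℕ) (a b c : ℕ → ZMod 2) :
    gPoly n a b c =
      ∑ j ∈ Finset.range n, ∑ k ∈ Finset.range (n - j), a j * b k * c (j + k) := by
  calc gPoly n a b c
      = ∑ j ∈ Finset.range n, ∑ i ∈ Finset.Ico j n, a j * b (i - j) * c i :=
        Finset.sum_comm' fun i j => by simp only [Finset.mem_range, Finset.mem_Ico]; omega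
    _ = ∑ j ∈ Finset.range n, ∑ k ∈ Finset.range (n - j), a j * b k * c (j + k) := by
        simp only [Finset.sum_Ico_eq_sum_range, Nat.add_sub_cancel_left]

theorem hPoly_eq_sum_range (n : ℕ) (a b c' : ℕ → ZMod 2) :
    hPoly n a b c' =
      ∑ j ∈ Finset.range n, ∑ i ∈ Finset.range j, a j * b (n + i - j) * c' i :=
  Finset.sum_comm' fun i j => by simp only [Finset.mem_range, Finset.mem_Ico]; omega

theorem gPoly_add_hPoly (n : ℕ) (a b c c' : ℕ → ZMod 2) :
    gPoly n a b c + hPoly n a b c' = hankelForm n a b (concatAt n c c') := by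
  rw [gPoly_eq_sum_range_sub, hPoly_eq_sum_range, ← Finset.sum_add_distrib]
  refine Finset.sum_congr rfl fun j hj => ?_
  have j_lt : j < n := Finset.mem_range.mp hj
  have row_split (f : ℕ → ZMod 2) : ∑ k ∈ Finset.range n, f k =
      ∑ k ∈ Finset.range (n - j), f k + ∑ i ∈ Finset.range j, f (n - j + i) := by
    rw [← Finset.sum_range_add, Nat.sub_add_cancel j_lt.le]
  rw [row_split]
  congr 1
  · refine Finset.sum_congr rfl fun k hk => ?_
    rw [concatAt_apply_of_lt c c' (Nat.add_lt_of_lt_sub' (Finset.mem_range.mp hk))]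
  · refine Finset.sum_congr rfl fun i _ => ?_
    rw [← Nat.sub_add_comm j_lt.le, show j + (n + i - j) = n + i by omega, concatAt_apply_add]

/-- Theorem 1 of the paper: the Karatsuba-like recursive decomposition of
`g(a,b,c) ⊕ h(a,b,c')` for vectors of even length `n = 2m`. -/
theorem gf_mult_recursive (m : ℕ) (hm : 0 < m) (a b c c' : ℕ → ZMod 2) :
    gPoly (2 * m) a b c + hPoly (2 * m) a b c' =
      gPoly m (fun i => a i + a (m + i)) (fun i => b i + b (m + i)) (fun i => c (m + i))
    + hPoly m (fun i => a i + a (m + i)) (fun i => b i + b (m + i)) (fun i => c' i)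
    + gPoly m (fun i => a (m + i)) (fun i => b (m + i)) (fun i => c' i + c (m + i))
    + hPoly m (fun i => a (m + i)) (fun i => b (m + i)) (fun i => c' i + c' (m + i))
    + gPoly m (fun i => a i) (fun i => b i) (fun i => c i + c (m + i))
    + hPoly m (fun i => a i) (fun i => b i) (fun i => c' i + c (m + i)) := by
  have middle_weight (i : ℕ) :
      concatAt (2 * m) c c' (m + i) = concatAt m (fun k => c (m + k)) c' i := by
    rw [two_mul, concatAt_add_apply_add]
  have high_weight (i : ℕ) : concatAt (2 * m) c c' (2 * m + i) - concatAt (2 * m) c c' (m + i) =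
      concatAt m (fun k => c' k + c (m + k)) (fun k => c' k + c' (m + k)) i := by
    rw [CharTwo.sub_eq_add, concatAt_apply_add, middle_weight, ← concatAt_shift_self m c' i]
    simp only [concatAt_add_concatAt, add_comm (c' (m + _))]
  have low_weight (i : ℕ) (hi : i + 1 < 2 * m) :
      concatAt (2 * m) c c' i - concatAt (2 * m) c c' (m + i) =
        concatAt m (fun k => c k + c (m + k)) (fun k => c' k + c (m + k)) i := by
    rw [CharTwo.sub_eq_add, concatAt_apply_of_lt c c' (by omega), middle_weight,
      ← concatAt_shift_self m c i]
    simp only [concatAt_add_concatAt, add_comm (c (m + _)) (c' _)]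
  rw [gPoly_add_hPoly, hankelForm_two_mul_karatsuba, hankelForm_congr low_weight]
  simp_rw [high_weight, middle_weight, ← gPoly_add_hPoly, add_assoc]
end

section
/- Let n be a positive even integer, n = 2m. For vectors a, b, c of length n over GF(2), with a_L, a_R denoting the left half (entries 0,…,m−1) and right half (entries m,…,n−1) of a, and similarly for b and c, one has g(a, b, c) = g(a_L ⊕ a_R, b_L ⊕ b_R, c_R) ⊕ g(a_R, b_R, c_R) ⊕ g(a_L, b_L, c_L ⊕ c_R) ⊕ h(a_L, b_L, c_R), where ⊕ on vectors denotes entrywise addition in GF(2), and g, h on the right-hand side are the corresponding polynomials for vectors of length m. -/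
/-!
The coefficients of `a * b` at `m + i` with `i < m` receive the two cross terms `a_L * b_R` and
`a_R * b_L`, together with the part of `a_L * b_L` that overflows past degree `m`; the latter is
what `h` collects. Karatsuba's trick replaces the cross terms by
`(a_L + a_R) * (b_L + b_R) - a_L * b_L - a_R * b_R`, and the subtracted `a_L * b_L` is absorbed in
the low half by pairing it with `c_L - c_R`. Signs disappear in characteristic two.
-/

section Convolution

open Finset

section Semiring

variable {R : Type*} [NonUnitalNonAssocSemiring R]

/-- The Cauchy product of two sequences: the coefficient of degree `i` in the product of the
power series with coefficients `a` and `b`. -/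
def cauchyConv (a b : ℕ → R) (i : ℕ) : R :=
  ∑ j ∈ range (i + 1), a j * b (i - j)

/-- The overflow of a product of polynomials of length `m`: for `i < m`, the coefficient of degree
`m + i` in the product of the polynomials with coefficients `a 0, …, a (m - 1)` and
`b 0, …, b (m - 1)`. -/
def overflowConv (m : ℕ) (a b : ℕ → R) (i : ℕ) : R :=
  ∑ j ∈ Ico (i + 1) m, a j * b (m + i - j)

/-- The trilinear form `g` over an arbitrary semiring: the first `n` coefficients of the Cauchy
product of `a` and `b`, paired with `c`. -/
def cauchyForm (n : ℕ) (a b c : ℕ → R) : R :=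
  ∑ i ∈ range n, cauchyConv a b i * c i

/-- The trilinear form `h` over an arbitrary semiring: the overflow of the product of `a` and `b`,
truncated to length `n`, paired with `c`. The summand `i = n - 1`, absent from `h`, is zero. -/
def overflowForm (n : ℕ) (a b c : ℕ → R) : R :=
  ∑ i ∈ range n, overflowConv n a b i * c i

theorem cauchyConv_add_left (a a' b : ℕ → R) (i : ℕ) :
    cauchyConv (a + a') b i = cauchyConv a b i + cauchyConv a' b i := by
  simp only [cauchyConv, Pi.add_apply, add_mul, sum_add_distrib]

theorem cauchyConv_add_right (a b b' : ℕ → R) (i : ℕ) :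
    cauchyConv a (b + b') i = cauchyConv a b i + cauchyConv a b' i := by
  simp only [cauchyConv, Pi.add_apply, mul_add, sum_add_distrib]

theorem cauchyConv_add_index {m i : ℕ} (hi : i < m) (a b : ℕ → R) :
    cauchyConv a b (m + i) =
      cauchyConv a (fun k ↦ b (m + k)) i + overflowConv m a b i
        + cauchyConv (fun k ↦ a (m + k)) b i := by
  have low : ∑ j ∈ range (i + 1), a j * b (m + i - j) = cauchyConv a (fun k ↦ b (m + k)) i :=
    sum_congr rfl fun j hj ↦ by rw [Nat.add_sub_assoc (mem_range_succ_iff.mp hj)]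
  have high : ∑ j ∈ range (i + 1), a (m + j) * b (m + i - (m + j)) =
      cauchyConv (fun k ↦ a (m + k)) b i := by
    simp only [cauchyConv, Nat.add_sub_add_left]
  calc cauchyConv a b (m + i)
      = ∑ j ∈ range m, a j * b (m + i - j)
          + ∑ j ∈ range (i + 1), a (m + j) * b (m + i - (m + j)) := by
        rw [cauchyConv, add_assoc, sum_range_add]
    _ = ∑ j ∈ range (i + 1), a j * b (m + i - j) + overflowConv m a b i
          + ∑ j ∈ range (i + 1), a (m + j) * b (m + i - (m + j)) := by
        rw [overflowConv, sum_range_add_sum_Ico _ (Nat.succ_le_of_lt hi)]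
    _ = _ := by rw [low, high]

theorem cauchyForm_add_left (n : ℕ) (a a' b c : ℕ → R) :
    cauchyForm n (a + a') b c = cauchyForm n a b c + cauchyForm n a' b c := by
  simp only [cauchyForm, cauchyConv_add_left, add_mul, sum_add_distrib]

theorem cauchyForm_add_middle (n : ℕ) (a b b' c : ℕ → R) :
    cauchyForm n a (b + b') c = cauchyForm n a b c + cauchyForm n a b' c := by
  simp only [cauchyForm, cauchyConv_add_right, add_mul, sum_add_distrib]

theorem cauchyForm_two_mul (m : ℕ) (a b c : ℕ → R) :
    cauchyForm (2 * m) a b c =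
      cauchyForm m a b c
        + (cauchyForm m a (fun i ↦ b (m + i)) (fun i ↦ c (m + i))
          + overflowForm m a b (fun i ↦ c (m + i))
          + cauchyForm m (fun i ↦ a (m + i)) b (fun i ↦ c (m + i))) := by
  rw [cauchyForm, two_mul, sum_range_add]
  congr 1
  simp only [cauchyForm, overflowForm, ← sum_add_distrib, ← add_mul]
  exact sum_congr rfl fun i hi ↦ by rw [cauchyConv_add_index (mem_range.mp hi)]

end Semiring

section Ring

variable {R : Type*} [NonUnitalNonAssocRing R]

theorem cauchyForm_sub_right (n : ℕ) (a b c c' : ℕ → R) :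
    cauchyForm n a b (c - c') = cauchyForm n a b c - cauchyForm n a b c' := by
  simp only [cauchyForm, Pi.sub_apply, mul_sub, sum_sub_distrib]

theorem gf_g_recursive_general (m : ℕ) (a b c : ℕ → R) :
    cauchyForm (2 * m) a b c =
      cauchyForm m (a + fun i ↦ a (m + i)) (b + fun i ↦ b (m + i)) (fun i ↦ c (m + i))
        - cauchyForm m (fun i ↦ a (m + i)) (fun i ↦ b (m + i)) (fun i ↦ c (m + i))
        + cauchyForm m a b (c - fun i ↦ c (m + i))
        + overflowForm m a b (fun i ↦ c (m + i)) := by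
  rw [cauchyForm_two_mul, cauchyForm_add_left, cauchyForm_add_middle, cauchyForm_add_middle,
    cauchyForm_sub_right]
  abel

end Ring

theorem gPoly_eq_cauchyForm (n : ℕ) (a b c : ℕ → ZMod 2) :
    gPoly n a b c = cauchyForm n a b c := by
  simp only [gPoly, cauchyForm, cauchyConv, sum_mul]

theorem hPoly_eq_overflowForm (n : ℕ) (a b c : ℕ → ZMod 2) :
    hPoly n a b c = overflowForm n a b c := by
  simp only [hPoly, overflowForm, overflowConv, sum_mul]
  cases n with
  | zero => rfl
  | succ k => rw [sum_range_succ _ k, Ico_self, sum_empty, add_zero, Nat.add_sub_cancel]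

end Convolution

/-- Recursive decomposition of `g(a,b,c)` for vectors of even length `n = 2m`
(Equation (32) of the paper). -/
theorem gf_g_recursive (m : ℕ) (hm : 0 < m) (a b c : ℕ → ZMod 2) :
    gPoly (2 * m) a b c =
      gPoly m (fun i => a i + a (m + i)) (fun i => b i + b (m + i)) (fun i => c (m + i))
    + gPoly m (fun i => a (m + i)) (fun i => b (m + i)) (fun i => c (m + i))
    + gPoly m (fun i => a i) (fun i => b i) (fun i => c i + c (m + i))
    + hPoly m (fun i => a i) (fun i => b i) (fun i => c (m + i)) := by
  simp only [gPoly_eq_cauchyForm, hPoly_eq_overflowForm]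
  have recursion := gf_g_recursive_general m a b c
  rw [CharTwo.sub_eq_add, CharTwo.sub_eq_add] at recursion
  exact recursion
end

section
/- Let n be a positive even integer, n = 2m. For vectors a, b, c' of length n over GF(2), with a_L, a_R denoting the left half (entries 0,…,m−1) and right half (entries m,…,n−1) of a, and similarly for b and c', one has h(a, b, c') = h(a_L ⊕ a_R, b_L ⊕ b_R, c'_L) ⊕ g(a_R, b_R, c'_L) ⊕ h(a_R, b_R, c'_L ⊕ c'_R) ⊕ h(a_L, b_L, c'_L), where ⊕ on vectors denotes entrywise addition in GF(2), and g, h on the right-hand side are the corresponding polynomials for vectors of length m. -/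
/-! Let `A`, `B` be the polynomials of degree less than `n` with coefficient vectors `a`, `b`. Then
`g` and `h` pair their third argument with the coefficients of `A * B` in degrees `0, …, n - 1` and
`n, …, 2 * n - 1`. For `n = 2 * m` write `A = A_L + X ^ m * A_R` and `B = B_L + X ^ m * B_R`. In
`A * B` the cross term `A_L * B_R + A_R * B_L` is shifted by `m` and `A_R * B_R` by `2 * m`, so the
upper coefficients of `A * B` are the upper ones of the cross term, padded with zeros, plus all
those of `A_R * B_R`. Karatsuba's identity writes the cross term as
`(A_L + A_R) * (B_L + B_R) - A_L * B_L - A_R * B_R`, and the signs disappear in characteristic two.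
-/

open Finset

section Convolution

variable {R : Type*} [NonUnitalNonAssocSemiring R]

/-- The coefficient of `X ^ i` in the product of the power series with coefficients `a` and `b`,
paired with the third argument in `g`. -/
def lowConv (a b : ℕ → R) (i : ℕ) : R :=
  ∑ j ∈ range (i + 1), a j * b (i - j)

/-- The coefficient of `X ^ (n + i)` in the product of the polynomials of degree less than `n` whose
coefficients are the first `n` entries of `a` and `b`. It is paired with the third
argument in `h`. The bound `j < n` keeps the subtraction from truncating. -/
def highConv (n : ℕ) (a b : ℕ → R) (i : ℕ) : R :=
  ∑ j ∈ Ico (i + 1) n, a j * b (n + i - j)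

theorem highConv_add_left (n : ℕ) (a a' b : ℕ → R) (i : ℕ) :
    highConv n (a + a') b i = highConv n a b i + highConv n a' b i := by
  simp only [highConv, Pi.add_apply, add_mul, sum_add_distrib]

theorem highConv_add_right (n : ℕ) (a b b' : ℕ → R) (i : ℕ) :
    highConv n a (b + b') i = highConv n a b i + highConv n a b' i := by
  simp only [highConv, Pi.add_apply, mul_add, sum_add_distrib]

theorem highConv_add_add_left (m k : ℕ) (a b : ℕ → R) (i : ℕ) :
    highConv (m + k) a b (m + i) = highConv k (fun j => a (m + j)) (fun j => b (m + j)) i := by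
  rw [highConv, add_assoc m i 1, add_comm m (i + 1), add_comm m k, ← sum_Ico_add]
  refine sum_congr rfl fun j hj => ?_
  have hjk : j < k := (mem_Ico.mp hj).2
  rw [show k + m + (m + i) - (m + j) = m + (k + i - j) by omega]

theorem sum_Ico_succ_add_self {M : Type*} [AddCommMonoid M] {m i : ℕ} (hi : i < m) (f : ℕ → M) :
    ∑ j ∈ Ico (i + 1) (m + m), f j =
      ∑ j ∈ Ico (i + 1) m, f j + ∑ j ∈ Ico (i + 1) m, f (m + j)
        + ∑ j ∈ range (i + 1), f (m + j) := by
  have upper : ∑ j ∈ Ico m (m + m), f j = ∑ j ∈ range m, f (m + j) := by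
    rw [sum_Ico_eq_sum_range, Nat.add_sub_cancel]
  rw [← sum_Ico_consecutive f (Nat.succ_le_of_lt hi) (Nat.le_add_left m m), upper,
    ← sum_range_add_sum_Ico _ (Nat.succ_le_of_lt hi), add_right_comm, add_assoc]

theorem highConv_add_self_of_lt {m i : ℕ} (hi : i < m) (a b : ℕ → R) :
    highConv (m + m) a b i =
      highConv m a (fun j => b (m + j)) i + highConv m (fun j => a (m + j)) b i
        + lowConv (fun j => a (m + j)) (fun j => b (m + j)) i := by
  rw [highConv, sum_Ico_succ_add_self hi]
  congr 1
  · congr 1 <;> refine sum_congr rfl fun j hj => ?_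
    · have hjm : j < m := (mem_Ico.mp hj).2
      rw [show m + m + i - j = m + (m + i - j) by omega]
    · rw [show m + m + i - (m + j) = m + i - j by omega]
  · refine sum_congr rfl fun j hj => ?_
    have hji : j < i + 1 := mem_range.mp hj
    rw [show m + m + i - (m + j) = m + (i - j) by omega]

end Convolution

theorem highConv_cross {R : Type*} [NonUnitalNonAssocRing R] (n : ℕ) (a a' b b' : ℕ → R) (i : ℕ) :
    highConv n a b' i + highConv n a' b i =
      highConv n (a + a') (b + b') i - highConv n a b i - highConv n a' b' i := by
  rw [highConv_add_left, highConv_add_right, highConv_add_right]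
  abel

theorem gf_h_recursive_general {R : Type*} [NonUnitalNonAssocRing R] (m : ℕ) (a b c : ℕ → R) :
    ∑ i ∈ range (2 * m), highConv (2 * m) a b i * c i =
      ∑ i ∈ range m, highConv m (fun j => a j + a (m + j)) (fun j => b j + b (m + j)) i * c i
    + ∑ i ∈ range m, lowConv (fun j => a (m + j)) (fun j => b (m + j)) i * c i
    + ∑ i ∈ range m, highConv m (fun j => a (m + j)) (fun j => b (m + j)) i * (c (m + i) - c i)
    - ∑ i ∈ range m, highConv m a b i * c i := by
  rw [two_mul, sum_range_add]
  simp only [← sum_add_distrib, ← sum_sub_distrib]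
  refine sum_congr rfl fun i hi => ?_
  rw [highConv_add_self_of_lt (mem_range.mp hi), highConv_add_add_left, highConv_cross]
  simp only [add_mul, sub_mul, mul_sub, Pi.add_def]
  abel

theorem gPoly_eq_sum_lowConv_mul (n : ℕ) (a b c : ℕ → ZMod 2) :
    gPoly n a b c = ∑ i ∈ range n, lowConv a b i * c i := by
  simp only [gPoly, lowConv, sum_mul]

theorem hPoly_eq_sum_highConv_mul (n : ℕ) (a b c' : ℕ → ZMod 2) :
    hPoly n a b c' = ∑ i ∈ range n, highConv n a b i * c' i := by
  simp only [hPoly, highConv, sum_mul]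
  refine sum_subset (range_mono (Nat.sub_le n 1)) fun i _ hi => ?_
  have hni : n ≤ i + 1 := by simpa using hi
  rw [Ico_eq_empty_of_le hni, sum_empty]

/-- Recursive decomposition of `h(a,b,c')` for vectors of even length `n = 2m`
(Equation (33) of the paper). -/
theorem gf_h_recursive (m : ℕ) (hm : 0 < m) (a b c' : ℕ → ZMod 2) :
    hPoly (2 * m) a b c' =
      hPoly m (fun i => a i + a (m + i)) (fun i => b i + b (m + i)) (fun i => c' i)
    + gPoly m (fun i => a (m + i)) (fun i => b (m + i)) (fun i => c' i)
    + hPoly m (fun i => a (m + i)) (fun i => b (m + i)) (fun i => c' i + c' (m + i))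
    + hPoly m (fun i => a i) (fun i => b i) (fun i => c' i) := by
  simp only [hPoly_eq_sum_highConv_mul, gPoly_eq_sum_lowConv_mul]
  simpa only [CharTwo.sub_eq_add, add_comm (c' (m + _))] using gf_h_recursive_general m a b c'
end

section
/- Let P(x) = x^n + x^k + 1 be a trinomial over GF(2) with 1 < k < n. Then for all integers i ≥ 0 and j ≥ 0, the closed-form congruence x^{k+i+j(n−k)} + x^{i+j(n−k)} ≡ x^{k+i} + Σ_{t=0}^{j} x^{i+t(n−k)} (mod P(x)) holds in the polynomial ring GF(2)[x]. -/
open Polynomial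

/-!
Over `GF(2)` the trinomial `P` is `X ^ n - X ^ k - 1`. Put `d = n - k`. Multiplying `P` by `X ^ s`
gives `X ^ (k + s + d) ≡ X ^ (k + s) + X ^ s`, that is, `X ^ s` is the increment of
`X ^ (k + s)` when `s` grows by `d`. Summing over `s = i, i + d, …, i + (j - 1) * d` telescopes,
so the difference of the two sides is `P` times a geometric sum with ratio `X ^ d`.
-/

section Ring

variable {R : Type*} [CommRing R] (x : R)

theorem sum_range_pow_add_mul (i d j : ℕ) :
    ∑ t ∈ Finset.range j, x ^ (i + t * d) = x ^ i * ∑ t ∈ Finset.range j, (x ^ d) ^ t := by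
  simp only [pow_add, pow_mul', Finset.mul_sum]

theorem pow_sub_pow_sub_one_mul_sum_range (k d i j : ℕ) :
    (x ^ (k + d) - x ^ k - 1) * ∑ t ∈ Finset.range j, x ^ (i + t * d) =
      x ^ (k + i + j * d) - x ^ (k + i) - ∑ t ∈ Finset.range j, x ^ (i + t * d) :=
  calc
    _ = x ^ (k + i) * ((x ^ d - 1) * ∑ t ∈ Finset.range j, (x ^ d) ^ t) -
        ∑ t ∈ Finset.range j, x ^ (i + t * d) := by
      rw [sum_range_pow_add_mul]
      ring
    _ = _ := by
      rw [mul_geom_sum]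
      ring

theorem trinomial_reduction_closed_form_general {n k : ℕ} (hkn : k ≤ n) (i j : ℕ) :
    x ^ n - x ^ k - 1 ∣
      (x ^ (k + i + j * (n - k)) + x ^ (i + j * (n - k)))
      - (x ^ (k + i) + ∑ t ∈ Finset.range (j + 1), x ^ (i + t * (n - k))) := by
  have telescoped := pow_sub_pow_sub_one_mul_sum_range x k (n - k) i j
  rw [Nat.add_sub_cancel' hkn] at telescoped
  refine Dvd.intro _ (telescoped.trans ?_)
  rw [Finset.sum_range_succ]
  ring

end Ring

/-- For a trinomial `P(x) = xⁿ + xᵏ + 1` over `GF(2)` with `1 < k < n`, for all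
`i ≥ 0` and `j ≥ 0` one has the closed-form congruence
`x^{k+i+j(n-k)} + x^{i+j(n-k)} ≡ x^{k+i} + Σ_{t=0}^{j} x^{i+t(n-k)}` modulo `P(x)`,
i.e. `P` divides the difference of the two sides in `GF(2)[x]`. -/
theorem trinomial_reduction_closed_form (n k : ℕ) (hk1 : 1 < k) (hkn : k < n)
    (i j : ℕ) :
    (X ^ n + X ^ k + 1 : (ZMod 2)[X]) ∣
      (X ^ (k + i + j * (n - k)) + X ^ (i + j * (n - k)))
      - (X ^ (k + i) + ∑ t ∈ Finset.range (j + 1), X ^ (i + t * (n - k))) := by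
  simpa only [CharTwo.sub_eq_add] using
    trinomial_reduction_closed_form_general (X : (ZMod 2)[X]) hkn.le i j
end
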